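/- (Nonexistence of MDS-size subsystem codes with nontrivial gauge.) There is no F_p-linear additive code X ⊆ F_q^{2n} such that Y := X ∩ X^{⊥s} is a proper subcode of X (i.e., R = √(|X|/|Y|) > 1), |X||Y| < q^{2n}, Y^{⊥s} \ X is nonempty, and q^n/√(|X||Y|) = q^{n−2d+2} where d = swt(Y^{⊥s} \ X). Equivalently, there do not exist Clifford subsystem codes with parameters ((n, q^{n−2d+2}, R>1, d))_q; in particular, no [[n, n−2d+2, r>0, d]]_q Clifford subsystem codes exist. -/

import Mathlib

/-!
Write `Y = X ∩ X^⊥`, `e = d - 1`, `m = [F_q : F_p]`, and let `W_T` be the subcode of `W` supported on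
a coordinate set `T`.  Since `supp(T)` and `supp(Tᶜ)` are mutually dual,
`(W^⊥)_T = (W + supp(Tᶜ))^⊥`, and counting dimensions over `F_p` gives
`dim (W^⊥)_T + dim W = 2m|T| + dim W_{Tᶜ}` (`finrank_orthogonal_inf_suppOn`).

For `|T| = e` there is no element of `Y^⊥ \ X` supported on `T`, so `(Y^⊥)_T = X_T` and
`(X^⊥)_T = Y_T`.  Adding the identities for `W = X` and `W = Y` and using the size condition
`dim X + dim Y = 4me`, one gets
`dim X_T + dim Y_T = dim X_{Tᶜ} + dim Y_{Tᶜ}`.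
The condition `K > 1` says `2e < n`, so `Tᶜ` contains an `e`-set `T'`, and applying the last identity
to `T` and to `T'` squeezes `X_{T'} = X_{Tᶜ}` and `Y_{T'} = Y_{Tᶜ}`.  As `|Tᶜ| > e`, every coordinate
of `Tᶜ` is avoided by some `T'`; hence `X_{Tᶜ} = Y_{Tᶜ} = 0`, and therefore also `X_T = Y_T = 0`.
The two dimension identities now read `dim Y = 2me` and `dim X = 2me`, so `X = Y`, contradicting
`R > 1`.
-/


open scoped Pointwise

noncomputable section

/-- `F_q^{2n}`: pairs `(a|b)` with `a, b ∈ F_q^n`. -/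
abbrev Pairs (F : Type) (n : ℕ) := (Fin n → F) × (Fin n → F)

/-- Symplectic weight: the number of coordinates `i` with `(a_i, b_i) ≠ (0,0)`. -/
def swt {F : Type} [Zero F] {n : ℕ} (u : Pairs F n) : ℕ :=
  Nat.card {i : Fin n // (u.1 i, u.2 i) ≠ (0, 0)}

/-- Trace-symplectic form: `⟨(a|b)|(a'|b')⟩ₛ = Tr_{q/p}(a'·b − a·b')`. -/
def sform (p : ℕ) {F : Type} [Field F] [Algebra (ZMod p) F] {n : ℕ}
    (u v : Pairs F n) : ZMod p :=
  Algebra.trace (ZMod p) F (∑ i, (v.1 i * u.2 i - u.1 i * v.2 i))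

/-- Trace-symplectic dual of a set `S ⊆ F_q^{2n}`. -/
def sdual (p : ℕ) {F : Type} [Field F] [Algebra (ZMod p) F] {n : ℕ}
    (S : Set (Pairs F n)) : Set (Pairs F n) :=
  {v | ∀ w ∈ S, sform p v w = 0}


/-! ### The symplectic form and coordinate-supported subspaces -/

/-- The trace-symplectic form as an `F_p`-bilinear form. -/
def sbil (p : ℕ) (F : Type) [Field F] [Algebra (ZMod p) F] (n : ℕ) :
    LinearMap.BilinForm (ZMod p) (Pairs F n) :=
  LinearMap.mk₂ (ZMod p) (sform p)
    (fun a b c => by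
      simp only [sform, ← map_add, ← Finset.sum_add_distrib]
      congr 1; refine Finset.sum_congr rfl fun i _ => ?_
      simp only [Prod.fst_add, Prod.snd_add, Pi.add_apply]; ring)
    (fun k a b => by
      simp only [sform, ← map_smul, Finset.smul_sum]
      congr 1; refine Finset.sum_congr rfl fun i _ => ?_
      simp only [Prod.smul_fst, Prod.smul_snd, Pi.smul_apply]
      simp only [Algebra.smul_def]; ring)
    (fun a b c => by
      simp only [sform, ← map_add, ← Finset.sum_add_distrib]
      congr 1; refine Finset.sum_congr rfl fun i _ => ?_
      simp only [Prod.fst_add, Prod.snd_add, Pi.add_apply]; ring)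
    (fun k a b => by
      simp only [sform, ← map_smul, Finset.smul_sum]
      congr 1; refine Finset.sum_congr rfl fun i _ => ?_
      simp only [Prod.smul_fst, Prod.smul_snd, Pi.smul_apply]
      simp only [Algebra.smul_def]; ring)

/-- The words of `F_q^{2n}` that vanish (in both halves) outside the coordinate set `T`. -/
def suppOn (p : ℕ) (F : Type) [Field F] [Algebra (ZMod p) F] {n : ℕ} (T : Finset (Fin n)) :
    Submodule (ZMod p) (Pairs F n) where
  carrier := {v | ∀ i, i ∉ T → v.1 i = 0 ∧ v.2 i = 0}
  add_mem' := by
    intro a b ha hb i hi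
    simp [ha i hi, hb i hi]
  zero_mem' := by simp
  smul_mem' := by
    intro c a ha i hi
    simp [ha i hi]

section SubsystemCodes

variable {p n : ℕ} {F : Type} [Field F] [Algebra (ZMod p) F]

theorem mem_suppOn {T : Finset (Fin n)} {v : Pairs F n} :
    v ∈ suppOn p F T ↔ ∀ i, i ∉ T → v.1 i = 0 ∧ v.2 i = 0 := Iff.rfl

theorem suppOn_mono {S T : Finset (Fin n)} (h : S ⊆ T) : suppOn p F S ≤ suppOn p F T :=
  fun _ hv i hi => hv i fun hS => hi (h hS)

theorem sbil_apply (u v : Pairs F n) : sbil p F n u v = sform p u v := rfl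

theorem sform_swap (u v : Pairs F n) : sform p u v = - sform p v u := by
  simp only [sform, ← map_neg, ← Finset.sum_neg_distrib]
  congr 1; refine Finset.sum_congr rfl fun i _ => ?_
  ring

theorem sbil_isRefl : (sbil p F n).IsRefl := by
  intro u v h
  rw [sbil_apply] at *
  rw [sform_swap, h, neg_zero]

theorem coe_orthogonal (W : Submodule (ZMod p) (Pairs F n)) :
    (((sbil p F n).orthogonal W : Submodule (ZMod p) (Pairs F n)) : Set (Pairs F n)) =
      sdual p (W : Set (Pairs F n)) := by
  ext v
  simp only [SetLike.mem_coe, LinearMap.BilinForm.mem_orthogonal_iff, sdual, Set.mem_ofPred_eq,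
    sbil_apply]
  exact forall₂_congr fun w _ => by rw [sform_swap, neg_eq_zero]

theorem swt_le_of_mem_suppOn {T : Finset (Fin n)} {v : Pairs F n} (hv : v ∈ suppOn p F T) :
    swt v ≤ T.card := by
  classical
  unfold swt
  rw [Nat.card_eq_fintype_card, Fintype.card_subtype]
  refine Finset.card_le_card fun i hi => ?_
  by_contra hT
  simp only [Finset.mem_filter] at hi
  exact hi.2 (Prod.ext (hv i hT).1 (hv i hT).2)

/-- Words supported on `T` are, through restriction to `T`, pairs of vectors indexed by `T`. -/
def suppOnEquiv (T : Finset (Fin n)) :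
    suppOn p F T ≃ₗ[ZMod p] (T → F) × (T → F) where
  toFun v := (fun i => v.1.1 i, fun i => v.1.2 i)
  invFun w := ⟨(fun i => if h : i ∈ T then w.1 ⟨i, h⟩ else 0,
    fun i => if h : i ∈ T then w.2 ⟨i, h⟩ else 0), fun i hi => by simp [hi]⟩
  map_add' _ _ := rfl
  map_smul' _ _ := rfl
  left_inv := by
    rintro ⟨v, hv⟩
    ext i
    all_goals
      by_cases h : i ∈ T
      · simp [h]
      · simp [h, hv i h]
  right_inv := by
    rintro ⟨a, b⟩
    ext i <;> simp

/-! ### Nondegeneracy and dimension counts -/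

variable [Fact p.Prime] [Finite F]

instance : Module.Finite (ZMod p) F := Module.Finite.of_finite

theorem finrank_suppOn (T : Finset (Fin n)) :
    Module.finrank (ZMod p) (suppOn p F T) = 2 * (Module.finrank (ZMod p) F * T.card) := by
  rw [(suppOnEquiv T).finrank_eq]
  simp [Module.finrank_pi_fintype]
  ring

theorem finrank_pairs :
    Module.finrank (ZMod p) (Pairs F n) = 2 * (Module.finrank (ZMod p) F * n) := by
  simp [Module.finrank_pi_fintype]
  ring

theorem eq_zero_of_trace {a : F} (h : ∀ b, Algebra.trace (ZMod p) F (a * b) = 0) : a = 0 :=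
  (traceForm_nondegenerate (ZMod p) F).1 a h

theorem orthogonal_suppOn (T : Finset (Fin n)) :
    (sbil p F n).orthogonal (suppOn p F T) = suppOn p F Tᶜ := by
  classical
  ext v
  rw [LinearMap.BilinForm.mem_orthogonal_iff]
  constructor
  · intro h i hi
    have hi : i ∈ T := by simpa using hi
    -- Test against the words supported at the single coordinate `i`, in either half.
    constructor
    · refine eq_zero_of_trace (p := p) fun b => ?_
      have := h (0, Pi.single i b) (fun j hj => by
        have : j ≠ i := by rintro rfl; exact hj hi
        simp [this])
      simpa [sbil_apply, sform, Pi.single_apply] using this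
    · refine eq_zero_of_trace (p := p) fun b => ?_
      have := h (Pi.single i b, 0) (fun j hj => by
        have : j ≠ i := by rintro rfl; exact hj hi
        simp [this])
      simpa [sbil_apply, sform, Pi.single_apply, mul_comm] using this
  · intro h w hw
    rw [sbil_apply, sform, Finset.sum_eq_zero, map_zero]
    intro i _
    by_cases hi : i ∈ T
    · simp [h i (by simpa using hi)]
    · simp [hw i hi]

theorem sbil_nondegenerate : (sbil p F n).Nondegenerate := by
  have key : (sbil p F n).orthogonal ⊤ = ⊥ := by
    have h := orthogonal_suppOn (p := p) (F := F) (Finset.univ : Finset (Fin n))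
    rw [show suppOn p F (Finset.univ : Finset (Fin n)) = ⊤ from
      eq_top_iff.2 fun v _ i hi => absurd (Finset.mem_univ i) hi] at h
    rw [h, eq_bot_iff]
    intro v hv
    have hv' : ∀ i, v.1 i = 0 ∧ v.2 i = 0 := fun i => hv i (by simp)
    exact Prod.ext (funext fun i => (hv' i).1) (funext fun i => (hv' i).2)
  refine ⟨fun x hx => ?_, fun x hx => ?_⟩
  · have : x ∈ (sbil p F n).orthogonal ⊤ := fun y _ => sbil_isRefl _ _ (hx y)
    simpa [key] using this
  · have : x ∈ (sbil p F n).orthogonal ⊤ := fun y _ => hx y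
    simpa [key] using this

/-- Additive form of the duality between shortening and puncturing:
`|(W^⊥)_T| · |W| = q^{2|T|} · |W_{Tᶜ}|`. -/
theorem finrank_orthogonal_inf_suppOn (W : Submodule (ZMod p) (Pairs F n))
    (T : Finset (Fin n)) :
    Module.finrank (ZMod p) ((sbil p F n).orthogonal W ⊓ suppOn p F T : Submodule _ _) +
        Module.finrank (ZMod p) W =
      2 * (Module.finrank (ZMod p) F * T.card) +
        Module.finrank (ZMod p) (W ⊓ suppOn p F Tᶜ : Submodule _ _) := by
  have h1 : (sbil p F n).orthogonal W ⊓ suppOn p F T =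
      (sbil p F n).orthogonal (W ⊔ suppOn p F Tᶜ) := by
    rw [← compl_compl T, ← orthogonal_suppOn, compl_compl]
    refine le_antisymm ?_ (le_inf (LinearMap.BilinForm.orthogonal_le le_sup_left)
      (LinearMap.BilinForm.orthogonal_le le_sup_right))
    rintro v ⟨hv1, hv2⟩ w hw
    obtain ⟨a, ha, b, hb, rfl⟩ := Submodule.mem_sup.1 hw
    have e1 : sbil p F n a v = 0 := hv1 a ha
    have e2 : sbil p F n b v = 0 := hv2 b hb
    change sbil p F n (a + b) v = 0
    rw [map_add, LinearMap.add_apply, e1, e2, add_zero]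
  have h2 := LinearMap.BilinForm.finrank_orthogonal (sbil_nondegenerate (p := p) (F := F) (n := n))
    (W ⊔ suppOn p F Tᶜ)
  have h3 := Submodule.finrank_sup_add_finrank_inf_eq W (suppOn p F Tᶜ)
  have h4 := Submodule.finrank_le (W ⊔ suppOn p F Tᶜ)
  rw [← h1] at h2
  have h5 := finrank_suppOn (p := p) (F := F) T
  have h6 := finrank_suppOn (p := p) (F := F) Tᶜ
  have h7 := finrank_pairs (p := p) (F := F) (n := n)
  have h8 : T.card + Tᶜ.card = n := by simp
  have h9 : Module.finrank (ZMod p) F * T.card + Module.finrank (ZMod p) F * Tᶜ.card =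
      Module.finrank (ZMod p) F * n := by rw [← mul_add, h8]
  omega

/-! ### Codes whose size meets the bound -/

/-- If `|S| > e` and `W_S` is no larger than `W_T` for every `e`-subset `T` of `S`, then all these
subcodes coincide with `W_S`; as each coordinate of `S` is avoided by some `T`, `W_S = 0`. -/
theorem inf_suppOn_eq_bot (W : Submodule (ZMod p) (Pairs F n)) (S : Finset (Fin n)) (e : ℕ)
    (he : e < S.card)
    (h : ∀ T ⊆ S, T.card = e → Module.finrank (ZMod p) (W ⊓ suppOn p F S : Submodule _ _) ≤
      Module.finrank (ZMod p) (W ⊓ suppOn p F T : Submodule _ _)) :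
    W ⊓ suppOn p F S = ⊥ := by
  rw [eq_bot_iff]
  intro v hv
  have key : ∀ i, v.1 i = 0 ∧ v.2 i = 0 := by
    intro i
    by_cases hi : i ∈ S
    · have hc : e ≤ (S.erase i).card := by rw [Finset.card_erase_of_mem hi]; omega
      obtain ⟨T, hT, hTe⟩ := Finset.exists_subset_card_eq hc
      have hTS : T ⊆ S := hT.trans (Finset.erase_subset _ _)
      have heq := Submodule.eq_of_le_of_finrank_le
        (inf_le_inf_left W (suppOn_mono (p := p) (F := F) hTS)) (h T hTS hTe)
      rw [← heq] at hv
      exact hv.2 i fun hiT => by simpa using hT hiT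
    · exact hv.2 i hi
  exact Prod.ext (funext fun i => (key i).1) (funext fun i => (key i).2)

/-- The linear-algebraic core, with `Y = X ∩ X^⊥` and the distance condition expressed
as: every word of `Y^⊥` supported on an `e`-set lies in `X`. -/
theorem eq_of_small_support (X Y : Submodule (ZMod p) (Pairs F n))
    (hY : Y = X ⊓ (sbil p F n).orthogonal X) (e : ℕ) (hn : 2 * e < n)
    (hsize : Module.finrank (ZMod p) X + Module.finrank (ZMod p) Y =
      4 * (Module.finrank (ZMod p) F * e))
    (hd : ∀ T : Finset (Fin n), T.card = e →
      (sbil p F n).orthogonal Y ⊓ suppOn p F T ≤ X) : Y = X := by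
  have hYX : Y ≤ X := hY ▸ inf_le_left
  have hYX' : Y ≤ (sbil p F n).orthogonal X := hY ▸ inf_le_right
  have hXYd : X ≤ (sbil p F n).orthogonal Y :=
    (LinearMap.BilinForm.le_orthogonal_orthogonal sbil_isRefl).trans
      (LinearMap.BilinForm.orthogonal_le hYX')
  have hXd : ∀ T : Finset (Fin n), T.card = e →
      (sbil p F n).orthogonal Y ⊓ suppOn p F T = X ⊓ suppOn p F T := fun T hT =>
    le_antisymm (le_inf (hd T hT) inf_le_right) (inf_le_inf_right _ hXYd)
  have hYd : ∀ T : Finset (Fin n), T.card = e →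
      (sbil p F n).orthogonal X ⊓ suppOn p F T = Y ⊓ suppOn p F T := fun T hT =>
    le_antisymm (le_inf (hY ▸ le_inf ((inf_le_inf_right _
      (LinearMap.BilinForm.orthogonal_le hYX)).trans (hd T hT)) inf_le_left) inf_le_right)
      (inf_le_inf_right _ hYX')
  have hA := fun (T : Finset (Fin n)) (hT : T.card = e) => by
    have := finrank_orthogonal_inf_suppOn Y T
    rwa [hXd T hT, hT] at this
  have hB := fun (T : Finset (Fin n)) (hT : T.card = e) => by
    have := finrank_orthogonal_inf_suppOn X T
    rwa [hYd T hT, hT] at this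
  have mono : ∀ (W : Submodule (ZMod p) (Pairs F n)) {S T : Finset (Fin n)}, S ⊆ T →
      Module.finrank (ZMod p) (W ⊓ suppOn p F S : Submodule _ _) ≤
      Module.finrank (ZMod p) (W ⊓ suppOn p F T : Submodule _ _) := fun W S T h =>
    Submodule.finrank_mono (inf_le_inf_left W (suppOn_mono h))
  obtain ⟨T, -, hT⟩ := Finset.exists_subset_card_eq
    (s := (Finset.univ : Finset (Fin n))) (n := e) (by simp; omega)
  have hTc : e < Tᶜ.card := by
    have : T.card + Tᶜ.card = n := by simp
    omega
  have squeeze : ∀ T' ⊆ Tᶜ, T'.card = e →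
      Module.finrank (ZMod p) (X ⊓ suppOn p F Tᶜ : Submodule _ _) ≤
        Module.finrank (ZMod p) (X ⊓ suppOn p F T' : Submodule _ _) ∧
      Module.finrank (ZMod p) (Y ⊓ suppOn p F Tᶜ : Submodule _ _) ≤
        Module.finrank (ZMod p) (Y ⊓ suppOn p F T' : Submodule _ _) := by
    intro T' hT' hc
    have hs : T ⊆ T'ᶜ := by
      rw [← compl_compl T]; exact Finset.compl_subset_compl.2 hT'
    have a1 := hA T hT
    have a2 := hB T hT
    have a3 := hA T' hc
    have a4 := hB T' hc
    have m1 := mono X hT'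
    have m2 := mono Y hT'
    have m3 := mono X hs
    have m4 := mono Y hs
    omega
  have hX0 := inf_suppOn_eq_bot X Tᶜ e hTc fun T' h h' => (squeeze T' h h').1
  have hY0 := inf_suppOn_eq_bot Y Tᶜ e hTc fun T' h h' => (squeeze T' h h').2
  have a1 := hA T hT
  have a2 := hB T hT
  rw [hY0, finrank_bot] at a1
  rw [hX0, finrank_bot] at a2
  exact Submodule.eq_of_le_of_finrank_le hYX (by omega)

end SubsystemCodes

/-- nonexistence of MDS-size subsystem codes with nontrivial gauge: there is
no `F_p`-linear additive code `X ⊆ F_q^{2n}` such that `Y = X ∩ X^{⊥s}` is a proper subcode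
of `X` (i.e. `R > 1`), `|X||Y| < q^{2n}` (i.e. `K > 1`), `Y^{⊥s} \ X` is nonempty, and
`K = q^n/√(|X||Y|) = q^{n−2d+2}` where `d = swt(Y^{⊥s} \ X)` (the last condition stated
multiplicatively as `|X|·|Y|·q⁴ = q^{4d}`). -/
theorem no_mds_size_with_gauge (p n : ℕ) (hp : p.Prime) (F : Type) [Field F] [Fintype F]
    [CharP F p] [Algebra (ZMod p) F] :
    ¬ ∃ X : Submodule (ZMod p) (Pairs F n),
      ((X : Set (Pairs F n)) ∩ sdual p (X : Set (Pairs F n))) ≠ (X : Set (Pairs F n)) ∧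
      (X : Set (Pairs F n)).ncard *
          ((X : Set (Pairs F n)) ∩ sdual p (X : Set (Pairs F n))).ncard <
        Fintype.card F ^ (2 * n) ∧
      (sdual p ((X : Set (Pairs F n)) ∩ sdual p (X : Set (Pairs F n))) \
        (X : Set (Pairs F n))).Nonempty ∧
      (X : Set (Pairs F n)).ncard *
          ((X : Set (Pairs F n)) ∩ sdual p (X : Set (Pairs F n))).ncard *
          Fintype.card F ^ 4 =
        Fintype.card F ^
          (4 * sInf (swt '' (sdual p ((X : Set (Pairs F n)) ∩
            sdual p (X : Set (Pairs F n))) \ (X : Set (Pairs F n))))) := by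
  have : Fact p.Prime := ⟨hp⟩
  rintro ⟨X, hne, hlt, -, hsz⟩
  set Y : Submodule (ZMod p) (Pairs F n) := X ⊓ (sbil p F n).orthogonal X with hY
  have hYc : (X : Set (Pairs F n)) ∩ sdual p (X : Set (Pairs F n)) = (Y : Set (Pairs F n)) := by
    rw [hY, Submodule.coe_inf, coe_orthogonal]
  rw [hYc] at hne hlt hsz
  rw [← coe_orthogonal] at hsz
  set d := sInf (swt '' ((((sbil p F n).orthogonal Y : Submodule (ZMod p) (Pairs F n)) :
    Set (Pairs F n)) \ (X : Set (Pairs F n)))) with hd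
  have hcard : ∀ W : Submodule (ZMod p) (Pairs F n),
      (W : Set (Pairs F n)).ncard = p ^ Module.finrank (ZMod p) W := by
    intro W
    have := Module.natCard_eq_pow_finrank (K := ZMod p) (V := W)
    rwa [Nat.card_zmod] at this
  have hF : Fintype.card F = p ^ Module.finrank (ZMod p) F := by
    rw [← Nat.card_eq_fintype_card, Module.natCard_eq_pow_finrank (K := ZMod p), Nat.card_zmod]
  have hm : 0 < Module.finrank (ZMod p) F := Module.finrank_pos
  rw [hcard, hcard, hF, ← pow_add, ← pow_mul] at hlt
  rw [hcard, hcard, hF, ← pow_add, ← pow_mul, ← pow_mul, ← pow_add] at hsz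
  have hlt' := (Nat.pow_lt_pow_iff_right hp.one_lt).1 hlt
  have hsz' := Nat.pow_right_injective hp.two_le hsz
  obtain ⟨e, he⟩ : ∃ e, d = e + 1 := by
    refine Nat.exists_eq_succ_of_ne_zero fun h0 => ?_
    rw [h0] at hsz'
    omega
  rw [he] at hsz'
  have hsize : Module.finrank (ZMod p) X + Module.finrank (ZMod p) Y =
      4 * (Module.finrank (ZMod p) F * e) := by linarith
  have hn : 2 * e < n := by
    by_contra! hcon
    nlinarith [Nat.mul_le_mul_left (Module.finrank (ZMod p) F) hcon]
  refine hne (congrArg _ (eq_of_small_support X Y hY e hn hsize ?_))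
  rintro T hT v ⟨hv1, hv2⟩
  by_contra hvX
  have h1 : d ≤ swt v := Nat.sInf_le ⟨v, ⟨hv1, hvX⟩, rfl⟩
  have h2 := swt_le_of_mem_suppOn hv2
  omega
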